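/- Let G be a fixed labelled (t+1)-partite multigraph pattern as in the model below, and consider the random multigraph 𝒢 = 𝒢(n_0,n,t,k,p) with n_0 = n_0(n). Suppose that Φ_G^v → ∞ as n → ∞. Then there is a constant c > 0 (depending only on G) such that with probability 1 − O(1/Φ_G^v) we have D_G ≥ c·Φ_G^v, where D_G is the maximum size of a set of pairwise vertex-disjoint good copies of G in 𝒢. -/

import Mathlib

open Filter

namespace PartiteModel

/-- Labels of the `2k` parallel edges between `V₀` and the other classes:
`(l, true)` stands for the label `l+1 ∈ [k]`, `(l, false)` for the label `-(l+1) ∈ [-k]`. -/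
abbrev Lab (k : ℕ) := Fin k × Bool

/-- A vertex in one of the classes `V₁, …, V_t` (each a copy of `Fin n`). -/
abbrev SideV (n t : ℕ) := Fin t × Fin n

/-- The edge slots of the complete `(t+1)`-partite multigraph `K`: labelled edges
between `V₀` and the side classes, and (simple) edges among side vertices. -/
abbrev EdgeSlot (n₀ n t k : ℕ) := (Fin n₀ × SideV n t × Lab k) ⊕ Sym2 (SideV n t)

/-- An outcome of the random multigraph `𝒢(n₀,n,t,k,p)`: for each edge slot of `K`,
whether the corresponding edge is present. -/
abbrev Omega (n₀ n t k : ℕ) := EdgeSlot n₀ n t k → Bool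

/-- The probability of the outcome `ω`, each edge being present independently with
probability `p`. -/
noncomputable def wgt (n₀ n t k : ℕ) (p : ℝ) (ω : Omega n₀ n t k) : ℝ :=
  p ^ (Finset.univ.filter fun e => ω e = true).card *
    (1 - p) ^ (Finset.univ.filter fun e => ω e = false).card

/-- Expectation of a random variable on `𝒢(n₀,n,t,k,p)`. -/
noncomputable def expec (n₀ n t k : ℕ) (p : ℝ) (X : Omega n₀ n t k → ℝ) : ℝ :=
  ∑ ω : Omega n₀ n t k, wgt n₀ n t k p ω * X ω

/-- Variance of a random variable on `𝒢(n₀,n,t,k,p)`. -/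
noncomputable def variance (n₀ n t k : ℕ) (p : ℝ) (X : Omega n₀ n t k → ℝ) : ℝ :=
  expec n₀ n t k p (fun ω => (X ω - expec n₀ n t k p X) ^ 2)

open scoped Classical in
/-- Probability of an event on `𝒢(n₀,n,t,k,p)`. -/
noncomputable def prOmega (n₀ n t k : ℕ) (p : ℝ) (S : Omega n₀ n t k → Prop) : ℝ :=
  ∑ ω : Omega n₀ n t k, if S ω then wgt n₀ n t k p ω else 0

/-- A `(t+1)`-partite multigraph pattern `G` with vertex classes
`Y₀ = Fin m0` and `Y_i = Fin (m i)`; `e0` is its set of labelled edges between `Y₀` and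
the side classes (so between a fixed pair of vertices there are at most `2k` such edges,
with distinct labels), and `e1` is its set of (simple) edges between two distinct side
classes. -/
structure Pattern (t k : ℕ) where
  m0 : ℕ
  m : Fin t → ℕ
  e0 : Finset (Fin m0 × Σ i : Fin t, Fin (m i) × Lab k)
  e1 : Finset (Sym2 (Σ i : Fin t, Fin (m i)))
  nodiag : ∀ e ∈ e1, ¬ (Sym2.map Sigma.fst e).IsDiag

variable {t k : ℕ}

/-- A candidate placement of the pattern `G` in the host `K`: a map of each vertex
class of `G` into the corresponding class of `K`. -/
structure CopyMap (G : Pattern t k) (n₀ n : ℕ) where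
  f0 : Fin G.m0 → Fin n₀
  f : (i : Fin t) → Fin (G.m i) → Fin n

/-- `c` is a good copy of the pattern `G` in the outcome `ω`: it is injective on every
vertex class, and every (labelled) edge of `G` is mapped to an edge present in `ω`. -/
def IsGoodCopy {n₀ n : ℕ} (G : Pattern t k) (ω : Omega n₀ n t k)
    (c : CopyMap G n₀ n) : Prop :=
  Function.Injective c.f0 ∧ (∀ i, Function.Injective (c.f i)) ∧
  (∀ z ∈ G.e0,
    ω (Sum.inl (c.f0 z.1, (z.2.1, c.f z.2.1 z.2.2.1), z.2.2.2)) = true) ∧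
  (∀ e ∈ G.e1,
    ω (Sum.inr (Sym2.map (fun y : Σ i : Fin t, Fin (G.m i) => (y.1, c.f y.1 y.2)) e))
      = true)

/-- `X_G`: the number of good copies of `G` in the outcome `ω`. -/
noncomputable def XG (G : Pattern t k) (n₀ n : ℕ) (ω : Omega n₀ n t k) : ℝ :=
  (Set.ncard {c : CopyMap G n₀ n | IsGoodCopy G ω c} : ℝ)

/-- A subgraph `G'` of the pattern `G`: a choice of vertex subsets of each class of `G`
together with a subset of those edges of `G` whose endvertices lie in the chosen sets. -/
structure Subpattern (G : Pattern t k) where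
  s0 : Finset (Fin G.m0)
  s : (i : Fin t) → Finset (Fin (G.m i))
  f0 : Finset (Fin G.m0 × Σ i : Fin t, Fin (G.m i) × Lab k)
  f1 : Finset (Sym2 (Σ i : Fin t, Fin (G.m i)))
  f0sub : f0 ⊆ G.e0
  f1sub : f1 ⊆ G.e1
  f0mem : ∀ z ∈ f0, z.1 ∈ s0 ∧ z.2.2.1 ∈ s z.2.1
  f1mem : ∀ e ∈ f1, ∀ y ∈ e, y.2 ∈ s y.1

/-- A candidate placement of the subpattern `H` in the host `K`. -/
structure SubCopyMap {G : Pattern t k} (H : Subpattern G) (n₀ n : ℕ) where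
  f0 : {a // a ∈ H.s0} → Fin n₀
  f : (i : Fin t) → {b // b ∈ H.s i} → Fin n

/-- `c` is a good copy of the subpattern `H` in the outcome `ω`. -/
def IsGoodSubCopy {n₀ n : ℕ} {G : Pattern t k} (H : Subpattern G)
    (ω : Omega n₀ n t k) (c : SubCopyMap H n₀ n) : Prop :=
  Function.Injective c.f0 ∧ (∀ i, Function.Injective (c.f i)) ∧
  (∀ z, ∀ hz : z ∈ H.f0,
    ω (Sum.inl (c.f0 ⟨z.1, (H.f0mem z hz).1⟩,
        (z.2.1, c.f z.2.1 ⟨z.2.2.1, (H.f0mem z hz).2⟩), z.2.2.2)) = true) ∧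
  (∀ e ∈ H.f1, ∀ x y : Σ i : Fin t, Fin (G.m i), e = s(x, y) →
    ∀ (hx : x.2 ∈ H.s x.1) (hy : y.2 ∈ H.s y.1),
      ω (Sum.inr s((x.1, c.f x.1 ⟨x.2, hx⟩), (y.1, c.f y.1 ⟨y.2, hy⟩))) = true)

/-- `X_{G'}`: the number of good copies of the subpattern `H` in the outcome `ω`. -/
noncomputable def XSub {G : Pattern t k} (H : Subpattern G) (n₀ n : ℕ)
    (ω : Omega n₀ n t k) : ℝ :=
  (Set.ncard {c : SubCopyMap H n₀ n | IsGoodSubCopy H ω c} : ℝ)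

/-- `Φ_G := min { E(X_{G'}) : G' ⊆ G, e_{G'} > 0 }`. -/
noncomputable def Phi (n₀ n : ℕ) (p : ℝ) (G : Pattern t k) : ℝ :=
  sInf {x : ℝ | ∃ H : Subpattern G, (H.f0.Nonempty ∨ H.f1.Nonempty) ∧
    x = expec n₀ n t k p (XSub H n₀ n)}

/-- `Φ_G^v := min { E(X_{G'}) : G' ⊆ G, v_{G'} > 0 }`. -/
noncomputable def PhiV (n₀ n : ℕ) (p : ℝ) (G : Pattern t k) : ℝ :=
  sInf {x : ℝ | ∃ H : Subpattern G, (H.s0.Nonempty ∨ ∃ i, (H.s i).Nonempty) ∧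
    x = expec n₀ n t k p (XSub H n₀ n)}

/-- Two copies of `G` are vertex-disjoint. -/
def DisjointCopies {n₀ n : ℕ} {G : Pattern t k} (c c' : CopyMap G n₀ n) : Prop :=
  (∀ a a', c.f0 a ≠ c'.f0 a') ∧ ∀ i b b', c.f i b ≠ c'.f i b'

/-- `D_G`: the maximum size of a set of pairwise vertex-disjoint good copies of `G`
in the outcome `ω`. -/
noncomputable def DG (G : Pattern t k) (n₀ n : ℕ) (ω : Omega n₀ n t k) : ℕ :=
  sSup {d : ℕ | ∃ F : Fin d → CopyMap G n₀ n,
    (∀ i, IsGoodCopy G ω (F i)) ∧ ∀ i i', i ≠ i' → DisjointCopies (F i) (F i')}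

end PartiteModel

open PartiteModel

/-!
The second-moment method, applied twice. Write `Φ` for `Φ_G^v`, and let `μ` be the order of
magnitude of `E X_G`. Call two copies of `G` overlapping if they share a vertex, and let `N` be the
number of ordered pairs of overlapping copies that are present. The copies that are present form a
graph under overlapping, and Turán's theorem provides at least `X_G² / N` pairwise disjoint ones, so
it suffices that with probability `1 - O(1/Φ)` both `X_G` is at least of order `μ` and `N` is at
most of order `μ² / Φ`.

Assign to a subgraph `S` of `K` the weight `w S`, the product of the class sizes of its vertices
times `p` to the number of its edges. The weight is modular,
`w (S ∪ T) * w (S ∩ T) = w S * w T`. If `T` is a copy of `G` sharing a vertex with `S`, then `S ∩ T`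
is a copy of a subgraph of `G`, so it has weight at least `Φ`, and adding `T` to `S` multiplies the
weight by at most `μ / Φ`. Hence overlapping pairs have weight at most `μ² / Φ`, and overlapping
pairs of overlapping pairs have weight at most `μ⁴ / Φ³`. The number of members of a family of
unions of boundedly many copies, weighted by their probabilities, is bounded by the maximal weight
up to a constant, which gives `Var X_G, E N = O(μ² / Φ)` and `Var N = O(μ⁴ / Φ³)`. Chebyshev's
inequality, with deviations of order `μ` for `X_G` and `μ² / Φ` for `N`, finishes the proof.
-/

namespace PartiteModel

open Finset

lemma pow_le_pow_mul_descFactorial {m n : ℕ} (h : m ≤ n) :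
    n ^ m ≤ m ^ m * n.descFactorial m := by
  obtain rfl | hm := m.eq_zero_or_pos
  · simp
  · have hn : n ≤ m * (n + 1 - m) := by
      obtain ⟨d, rfl⟩ := Nat.exists_eq_add_of_le h
      rw [show m + d + 1 - m = d + 1 by lia]
      nlinarith
    calc n ^ m ≤ (m * (n + 1 - m)) ^ m := Nat.pow_le_pow_left hn m
      _ = m ^ m * (n + 1 - m) ^ m := Nat.mul_pow ..
      _ ≤ m ^ m * n.descFactorial m := by gcongr; exact Nat.pow_sub_le_descFactorial n m

section OverlapCounting

variable {W : Type*} [DecidableEq W] {w : W → ℝ}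

-- A choice of `v` inside `S` costs a factor `1`, and there are at most `#S` of them; a choice
-- outside `S` costs a factor `1 / #B`, so all of these together contribute at most `1`.
lemma sum_prod_inv_insert_le (hw : ∀ v, 0 ≤ w v) (S : Finset W) {B : Finset W}
    (hB : ∀ v ∈ B, (#B : ℝ) ≤ w v) :
    ∑ v ∈ B, ∏ u ∈ insert v S, (w u)⁻¹ ≤ (#S + 1) * ∏ u ∈ S, (w u)⁻¹ := by
  have hS : 0 ≤ ∏ u ∈ S, (w u)⁻¹ := prod_nonneg fun u _ => inv_nonneg.2 (hw u)
  have hterm : ∀ v ∈ B, ∏ u ∈ insert v S, (w u)⁻¹ ≤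
      ((if v ∈ S then 1 else 0) + (#B : ℝ)⁻¹) * ∏ u ∈ S, (w u)⁻¹ := by
    intro v hv
    by_cases hvS : v ∈ S
    · rw [insert_eq_of_mem hvS, if_pos hvS]
      exact le_mul_of_one_le_left hS (by simp)
    · have hBpos : (0 : ℝ) < #B := by exact_mod_cast card_pos.2 ⟨v, hv⟩
      rw [prod_insert hvS, if_neg hvS, zero_add]
      gcongr
      exact hB v hv
  have hcount : ∑ v ∈ B, ((if v ∈ S then 1 else 0) + (#B : ℝ)⁻¹) ≤ #S + 1 := by
    rw [sum_add_distrib, sum_boole, sum_const, nsmul_eq_mul]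
    gcongr
    · exact fun v hv => (mem_filter.1 hv).2
    · exact mul_inv_le_one
  calc ∑ v ∈ B, ∏ u ∈ insert v S, (w u)⁻¹
      ≤ (∑ v ∈ B, ((if v ∈ S then 1 else 0) + (#B : ℝ)⁻¹)) * ∏ u ∈ S, (w u)⁻¹ := by
        rw [sum_mul]; exact sum_le_sum hterm
    _ ≤ _ := by gcongr

lemma sum_piFinset_fin_prod_inv_image_le (hw : ∀ v, 0 ≤ w v) {m : ℕ} (B : Fin m → Finset W)
    (hB : ∀ i, ∀ v ∈ B i, (#(B i) : ℝ) ≤ w v) :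
    ∑ φ ∈ Fintype.piFinset B, ∏ v ∈ univ.image φ, (w v)⁻¹ ≤ m.factorial := by
  induction m with
  | zero => simp [Fintype.piFinset]
  | succ m ih =>
    have hcons (v : W) (φ : Fin m → W) :
        univ.image (Fin.cons v φ : Fin (m + 1) → W) = insert v (univ.image φ) := by
      ext; simp [Fin.exists_fin_succ, eq_comm]
    calc ∑ φ ∈ Fintype.piFinset B, ∏ v ∈ univ.image φ, (w v)⁻¹
        = ∑ z ∈ B 0 ×ˢ Fintype.piFinset (Fin.tail B),
            ∏ v ∈ insert z.1 (univ.image z.2), (w v)⁻¹ := by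
          refine sum_equiv (Fin.consEquiv fun _ => W).symm (fun φ => ?_) fun φ _ => ?_
          · rw [Fin.mem_piFinset_iff_zero_tail]; simp [Fin.consEquiv]
          · rw [← hcons]; simp [Fin.consEquiv]
      _ ≤ ∑ φ ∈ Fintype.piFinset (Fin.tail B),
            ((m + 1 : ℕ) : ℝ) * ∏ v ∈ univ.image φ, (w v)⁻¹ := by
          rw [sum_product_right]
          refine sum_le_sum fun φ _ => (sum_prod_inv_insert_le hw (univ.image φ) (hB 0)).trans ?_
          have : #(univ.image φ) ≤ m := card_image_le.trans_eq (by simp)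
          have := prod_nonneg fun v (_ : v ∈ univ.image φ) => inv_nonneg.2 (hw v)
          push_cast
          gcongr
      _ ≤ (m + 1).factorial := by
          rw [← mul_sum, Nat.factorial_succ, Nat.cast_mul]
          gcongr
          exact ih _ fun i => hB i.succ

lemma sum_piFinset_prod_inv_image_le {ι : Type*} [Fintype ι] [DecidableEq ι]
    (hw : ∀ v, 0 ≤ w v) (B : ι → Finset W) (hB : ∀ i, ∀ v ∈ B i, (#(B i) : ℝ) ≤ w v) :
    ∑ φ ∈ Fintype.piFinset B, ∏ v ∈ univ.image φ, (w v)⁻¹ ≤ (Fintype.card ι).factorial := by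
  let e := Fintype.equivFin ι
  refine (sum_equiv (e.arrowCongr (Equiv.refl W)) (fun φ => ?_) fun φ _ => ?_).trans_le
    (sum_piFinset_fin_prod_inv_image_le hw (B ∘ e.symm) fun i => hB _)
  · simp [e.symm.forall_congr_left]
  · congr 1
    ext
    simp [e.symm.exists_congr_left]

lemma sum_le_factorial_mul_of_injOn {ι A : Type*} [Fintype ι]
    (hw : ∀ v, 0 ≤ w v) (B : ι → Finset W) (hB : ∀ i, ∀ v ∈ B i, (#(B i) : ℝ) ≤ w v)
    {J : Finset A} {T : A → ι → W} (hT : Set.InjOn T J) (hTB : ∀ j ∈ J, ∀ i, T j i ∈ B i)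
    {q : A → ℝ} {M : ℝ} (hM : 0 ≤ M)
    (hq : ∀ j ∈ J, (∏ v ∈ univ.image (T j), w v) * q j ≤ M) :
    ∑ j ∈ J, q j ≤ (Fintype.card ι).factorial * M := by
  classical
  have hpos : ∀ j ∈ J, ∀ v ∈ univ.image (T j), 0 < w v := by
    simp only [mem_image, mem_univ, true_and, forall_exists_index, forall_apply_eq_imp_iff]
    intro j hj i
    have : 0 < #(B i) := card_pos.2 ⟨_, hTB j hj i⟩
    exact (Nat.cast_pos.2 this).trans_le (hB i _ (hTB j hj i))
  calc ∑ j ∈ J, q j ≤ ∑ j ∈ J, (∏ v ∈ univ.image (T j), (w v)⁻¹) * M := by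
        refine sum_le_sum fun j hj => ?_
        rw [prod_inv_distrib, inv_mul_eq_div, le_div_iff₀' (prod_pos (hpos j hj))]
        exact hq j hj
    _ = (∑ φ ∈ J.image T, ∏ v ∈ univ.image φ, (w v)⁻¹) * M := by
        rw [sum_mul, sum_image hT]
    _ ≤ (∑ φ ∈ Fintype.piFinset B, ∏ v ∈ univ.image φ, (w v)⁻¹) * M := by
        gcongr ?_ * M
        refine sum_le_sum_of_subset_of_nonneg (image_subset_iff.2 fun j hj => ?_) fun _ _ _ =>
          prod_nonneg fun v _ => inv_nonneg.2 (hw v)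
        exact Fintype.mem_piFinset.2 (hTB j hj)
    _ ≤ _ := by gcongr; exact sum_piFinset_prod_inv_image_le hw B hB

end OverlapCounting

lemma sq_card_le_indepNum_mul_sum_degree_add_one {V : Type*} [Fintype V] (H : SimpleGraph V)
    [DecidableRel H.Adj] :
    Fintype.card V ^ 2 ≤ H.indepNum * ∑ v, (H.degree v + 1) := by
  classical
  set n := Fintype.card V
  have hfree : Hᶜ.CliqueFree (H.indepNum + 1) := fun s hs => by
    have hle := (H.isClique_compl.1 hs.isClique).card_le_indepNum
    rw [hs.card_eq] at hle
    lia
  have hturan : H.indepNum * (2 * #Hᶜ.edgeFinset) ≤ (H.indepNum - 1) * n ^ 2 := by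
    have hedges : #Hᶜ.edgeFinset ≤ #(SimpleGraph.turanGraph n H.indepNum).edgeFinset := by
      rw [SimpleGraph.card_edgeFinset_turanGraph]
      exact hfree.card_edgeFinset_le
    have := SimpleGraph.mul_card_edgeFinset_turanGraph_le (n := n) (r := H.indepNum)
    nlinarith
  have hdegree : 2 * #Hᶜ.edgeFinset + ∑ v, (H.degree v + 1) = n ^ 2 := by
    rw [← Hᶜ.sum_degrees_eq_twice_card_edges, ← sum_add_distrib, sq, ← smul_eq_mul n n]
    refine sum_eq_card_nsmul fun v _ => ?_
    have := H.degree_lt_card_verts v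
    rw [H.degree_compl]
    lia
  obtain hV | hV := isEmpty_or_nonempty V
  · simp [n]
  · have hr : 1 ≤ H.indepNum := by
      have : H.IsIndepSet ({Classical.arbitrary V} : Finset V) := by simp
      simpa using this.card_le_indepNum
    obtain ⟨r, hr⟩ := Nat.exists_eq_add_of_le' hr
    rw [hr] at hturan ⊢
    rw [Nat.add_sub_cancel] at hturan
    nlinarith

lemma exists_subset_pairwise_not_sq_card_le {α : Type*} (s : Finset α) {R : α → α → Prop}
    [DecidableRel R] (hrefl : ∀ a ∈ s, R a a) (hsymm : ∀ a b, R a b → R b a) :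
    ∃ I ⊆ s, (I : Set α).Pairwise (fun a b => ¬ R a b) ∧
      #s ^ 2 ≤ #I * #{z ∈ s ×ˢ s | R z.1 z.2} := by
  classical
  let H : SimpleGraph s := .fromRel fun a b => R a b
  have hadj (a b : s) : H.Adj a b ↔ a ≠ b ∧ R a b := by
    rw [SimpleGraph.fromRel_adj, or_iff_left_of_imp (hsymm b a)]
  obtain ⟨I, hI⟩ := H.exists_isNIndepSet_indepNum
  refine ⟨I.map (.subtype _), fun a ha => property_of_mem_map_subtype I ha, ?_, ?_⟩
  · rintro _ ha _ hb hab hR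
    obtain ⟨a, haI, rfl⟩ := mem_map.1 (mem_coe.1 ha)
    obtain ⟨b, hbI, rfl⟩ := mem_map.1 (mem_coe.1 hb)
    have hne : a ≠ b := fun h => hab (congrArg _ h)
    exact hI.1 (mem_coe.2 haI) (mem_coe.2 hbI) hne ((hadj a b).2 ⟨hne, hR⟩)
  · have hcount : ∑ a, (H.degree a + 1) = #{z ∈ s ×ˢ s | R z.1 z.2} := by
      rw [card_filter, sum_product, ← sum_coe_sort s]
      refine sum_congr rfl fun a _ => ?_
      have hrow : univ.filter (fun b : s => R a b) = insert a (H.neighborFinset a) := by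
        ext b
        obtain rfl | hab := eq_or_ne b a
        · simp [hrefl _ b.2]
        · simp [hadj, hab, hab.symm]
      rw [← sum_coe_sort s, ← card_filter, hrow, card_insert_of_notMem (by simp),
        H.card_neighborFinset_eq_degree]
    rw [card_map, hI.2, ← hcount, ← Fintype.card_coe]
    exact sq_card_le_indepNum_mul_sum_degree_add_one H

variable {t k n₀ n : ℕ} {p : ℝ}

section Probability

lemma wgt_eq_prod (ω : Omega n₀ n t k) :
    wgt n₀ n t k p ω = ∏ e, if ω e = true then p else 1 - p := by
  simp [wgt, prod_ite]

lemma wgt_nonneg (hp₀ : 0 ≤ p) (hp₁ : p ≤ 1) (ω : Omega n₀ n t k) : 0 ≤ wgt n₀ n t k p ω :=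
  mul_nonneg (pow_nonneg hp₀ _) (pow_nonneg (sub_nonneg.2 hp₁) _)

lemma expec_nonneg (hp₀ : 0 ≤ p) (hp₁ : p ≤ 1) {X : Omega n₀ n t k → ℝ} (hX : ∀ ω, 0 ≤ X ω) :
    0 ≤ expec n₀ n t k p X :=
  sum_nonneg fun ω _ => mul_nonneg (wgt_nonneg hp₀ hp₁ ω) (hX ω)

lemma expec_mono (hp₀ : 0 ≤ p) (hp₁ : p ≤ 1) {X Y : Omega n₀ n t k → ℝ} (h : ∀ ω, X ω ≤ Y ω) :
    expec n₀ n t k p X ≤ expec n₀ n t k p Y :=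
  sum_le_sum fun ω _ => mul_le_mul_of_nonneg_left (h ω) (wgt_nonneg hp₀ hp₁ ω)

lemma expec_add (X Y : Omega n₀ n t k → ℝ) :
    expec n₀ n t k p (fun ω => X ω + Y ω) = expec n₀ n t k p X + expec n₀ n t k p Y := by
  simp only [expec, mul_add, sum_add_distrib]

lemma expec_sub (X Y : Omega n₀ n t k → ℝ) :
    expec n₀ n t k p (fun ω => X ω - Y ω) = expec n₀ n t k p X - expec n₀ n t k p Y := by
  simp only [expec, mul_sub, sum_sub_distrib]

lemma expec_mul_const (X : Omega n₀ n t k → ℝ) (a : ℝ) :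
    expec n₀ n t k p (fun ω => X ω * a) = expec n₀ n t k p X * a := by
  simp only [expec, ← mul_assoc, sum_mul]

lemma expec_sum {A : Type*} (J : Finset A) (X : A → Omega n₀ n t k → ℝ) :
    expec n₀ n t k p (fun ω => ∑ j ∈ J, X j ω) = ∑ j ∈ J, expec n₀ n t k p (X j) := by
  simp only [expec, mul_sum]
  exact sum_comm

lemma expec_ite_forall_mem (S : Finset (EdgeSlot n₀ n t k)) :
    expec n₀ n t k p (fun ω => if ∀ e ∈ S, ω e = true then 1 else 0) = p ^ #S := by
  have hfactor (ω : Omega n₀ n t k) :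
      wgt n₀ n t k p ω * (if ∀ e ∈ S, ω e = true then 1 else 0) =
        ∏ e, if ω e = true then p else if e ∈ S then 0 else 1 - p := by
    have hind : (if ∀ e ∈ S, ω e = true then (1 : ℝ) else 0) =
        ∏ e, if e ∈ S then (if ω e = true then 1 else 0) else 1 := by
      rw [Fintype.prod_ite_mem, prod_ite_zero, prod_const_one]
    rw [wgt_eq_prod, hind, ← prod_mul_distrib]
    refine prod_congr rfl fun e _ => ?_
    split_ifs <;> simp
  calc expec n₀ n t k p (fun ω => if ∀ e ∈ S, ω e = true then 1 else 0)
      = ∑ ω : Omega n₀ n t k, ∏ e, if ω e = true then p else if e ∈ S then 0 else 1 - p :=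
        sum_congr rfl fun ω _ => hfactor ω
    _ = ∏ e, ∑ b : Bool, if b = true then p else if e ∈ S then 0 else 1 - p := by
        rw [Fintype.prod_sum]
    _ = ∏ e, if e ∈ S then p else 1 := prod_congr rfl fun e _ => by
        by_cases he : e ∈ S <;> simp [he]
    _ = p ^ #S := by rw [Fintype.prod_ite_mem, prod_const]

lemma expec_const (a : ℝ) : expec n₀ n t k p (fun _ => a) = a := by
  have hone : expec n₀ n t k p (fun _ => 1) = 1 := by
    simpa using expec_ite_forall_mem (p := p) (∅ : Finset (EdgeSlot n₀ n t k))
  simpa [hone] using expec_mul_const (p := p) (fun _ : Omega n₀ n t k => 1) a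

lemma one_sub_expec_le_prOmega (hp₀ : 0 ≤ p) (hp₁ : p ≤ 1) {S : Omega n₀ n t k → Prop}
    {Z : Omega n₀ n t k → ℝ} (hZ : ∀ ω, 0 ≤ Z ω) (hS : ∀ ω, ¬ S ω → 1 ≤ Z ω) :
    1 - expec n₀ n t k p Z ≤ prOmega n₀ n t k p S := by
  classical
  have hpr : prOmega n₀ n t k p S = expec n₀ n t k p fun ω => if S ω then 1 else 0 := by
    simp [prOmega, expec]
  have hone : expec n₀ n t k p (fun ω => 1 - Z ω) = 1 - expec n₀ n t k p Z := by
    rw [expec_sub, expec_const]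
  rw [hpr, ← hone]
  refine expec_mono hp₀ hp₁ fun ω => ?_
  split_ifs with h
  · exact sub_le_self 1 (hZ ω)
  · exact sub_nonpos.2 (hS ω h)

lemma variance_eq_expec_sq_sub (X : Omega n₀ n t k → ℝ) :
    variance n₀ n t k p X =
      expec n₀ n t k p (fun ω => X ω * X ω) - expec n₀ n t k p X * expec n₀ n t k p X := by
  set a := expec n₀ n t k p X with ha
  have hexpand : (fun ω => (X ω - a) ^ 2) = fun ω => X ω * X ω - X ω * (2 * a) + a * a := by
    ext; ring
  rw [variance, ← ha, hexpand, expec_add, expec_sub, expec_mul_const, expec_const, ← ha]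
  ring

section PresentCount

variable {A : Type*} (J : Finset A) (s : A → Finset (EdgeSlot n₀ n t k))

/-- The number of indices `j ∈ J` all of whose edge slots `s j` are present in `ω`. Counts of
copies, and of pairs of overlapping copies, are of this form. -/
def presentCount (ω : Omega n₀ n t k) : ℕ := #{j ∈ J | ∀ e ∈ s j, ω e = true}

lemma expec_presentCount :
    expec n₀ n t k p (fun ω => presentCount J s ω) = ∑ j ∈ J, p ^ #(s j) := by
  simp only [presentCount, natCast_card_filter, expec_sum, expec_ite_forall_mem]

lemma presentCount_mul_self (ω : Omega n₀ n t k) :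
    presentCount J s ω * presentCount J s ω =
      presentCount (J ×ˢ J) (fun z => s z.1 ∪ s z.2) ω := by
  simp only [presentCount, ← card_product, ← filter_product, mem_union, or_imp, forall_and]

lemma variance_presentCount_le (hp₀ : 0 ≤ p) {P : Finset (A × A)}
    (hP : ∀ z ∈ J ×ˢ J, ¬ Disjoint (s z.1) (s z.2) → z ∈ P) :
    variance n₀ n t k p (fun ω => presentCount J s ω) ≤ ∑ z ∈ P, p ^ #(s z.1 ∪ s z.2) := by
  classical
  simp only [variance_eq_expec_sq_sub, ← Nat.cast_mul, presentCount_mul_self, expec_presentCount]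
  rw [sum_mul_sum, ← sum_product', ← sum_sub_distrib]
  calc ∑ z ∈ J ×ˢ J, (p ^ #(s z.1 ∪ s z.2) - p ^ #(s z.1) * p ^ #(s z.2))
      ≤ ∑ z ∈ J ×ˢ J, if z ∈ P then p ^ #(s z.1 ∪ s z.2) else 0 := by
        refine sum_le_sum fun z hz => ?_
        split_ifs with h
        · exact sub_le_self _ (by positivity)
        · have hdisj : Disjoint (s z.1) (s z.2) := not_not.1 fun h' => h (hP z hz h')
          rw [card_union_of_disjoint hdisj, pow_add, sub_self]
    _ ≤ ∑ z ∈ P, p ^ #(s z.1 ∪ s z.2) := by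
        rw [← sum_filter]
        exact sum_le_sum_of_subset_of_nonneg (fun z hz => (mem_filter.1 hz).2)
          fun _ _ _ => by positivity

end PresentCount

lemma one_le_prOmega_of_forall (hp₀ : 0 ≤ p) (hp₁ : p ≤ 1) {S : Omega n₀ n t k → Prop}
    (hS : ∀ ω, S ω) : 1 ≤ prOmega n₀ n t k p S := by
  simpa [expec_const] using one_sub_expec_le_prOmega hp₀ hp₁ (Z := fun _ => 0)
    (fun _ => le_rfl) fun ω h => absurd (hS ω) h

lemma prOmega_mono (hp₀ : 0 ≤ p) (hp₁ : p ≤ 1) {S T : Omega n₀ n t k → Prop}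
    (h : ∀ ω, S ω → T ω) : prOmega n₀ n t k p S ≤ prOmega n₀ n t k p T := by
  classical
  refine sum_le_sum fun ω _ => ?_
  split_ifs with hS hT hT
  exacts [le_rfl, absurd (h ω hS) hT, wgt_nonneg hp₀ hp₁ ω, le_rfl]

lemma one_sub_variance_div_add_le_prOmega (hp₀ : 0 ≤ p) (hp₁ : p ≤ 1)
    (X Y : Omega n₀ n t k → ℝ) {a b : ℝ} (ha : 0 < a) (hb : 0 < b) :
    1 - (variance n₀ n t k p X / a ^ 2 + variance n₀ n t k p Y / b ^ 2) ≤
      prOmega n₀ n t k p fun ω =>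
        |X ω - expec n₀ n t k p X| < a ∧ |Y ω - expec n₀ n t k p Y| < b := by
  set x := expec n₀ n t k p X
  set y := expec n₀ n t k p Y
  let Z (ω : Omega n₀ n t k) : ℝ := (X ω - x) ^ 2 * (a ^ 2)⁻¹ + (Y ω - y) ^ 2 * (b ^ 2)⁻¹
  have hEZ : expec n₀ n t k p Z =
      variance n₀ n t k p X / a ^ 2 + variance n₀ n t k p Y / b ^ 2 := by
    simp only [Z, expec_add, expec_mul_const, variance, x, y, div_eq_mul_inv]
  rw [← hEZ]
  refine one_sub_expec_le_prOmega hp₀ hp₁ (fun ω => by positivity) fun ω hω => ?_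
  have hlarge {u r : ℝ} (hr : 0 < r) (hu : r ≤ |u|) : 1 ≤ u ^ 2 * (r ^ 2)⁻¹ := by
    rw [le_mul_inv_iff₀ (by positivity), one_mul, ← sq_abs u]
    gcongr
  obtain hX | hY := not_and_or.1 hω
  · exact (hlarge ha (not_lt.1 hX)).trans (le_add_of_nonneg_right (by positivity))
  · exact (hlarge hb (not_lt.1 hY)).trans (le_add_of_nonneg_left (by positivity))

lemma one_sub_div_le_prOmega_of_sq_le_mul (hp₀ : 0 ≤ p) (hp₁ : p ≤ 1)
    {D X N : Omega n₀ n t k → ℝ} (hD : ∀ ω, 0 ≤ D ω) (hDN : ∀ ω, X ω ^ 2 ≤ D ω * N ω)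
    {κ K₂ K₄ μ Φ : ℝ} (hκ : 0 < κ) (hμ : 0 < μ) (hΦ : 0 < Φ) (hK₂ : 0 ≤ K₂)
    (hEX : μ ≤ κ * expec n₀ n t k p X) (hVX : variance n₀ n t k p X ≤ K₂ * (μ ^ 2 / Φ))
    (hEN : expec n₀ n t k p N ≤ K₂ * (μ ^ 2 / Φ))
    (hVN : variance n₀ n t k p N ≤ K₄ * (μ ^ 4 / Φ ^ 3)) :
    1 - (4 * κ ^ 2 * K₂ + K₄) / Φ ≤
      prOmega n₀ n t k p fun ω => 1 / (4 * κ ^ 2 * (K₂ + 1)) * Φ ≤ D ω := by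
  set a := μ / (2 * κ) with ha
  set b := μ ^ 2 / Φ with hb
  have ha₀ : 0 < a := by positivity
  have hb₀ : 0 < b := by positivity
  have hbound : variance n₀ n t k p X / a ^ 2 + variance n₀ n t k p N / b ^ 2 ≤
      (4 * κ ^ 2 * K₂ + K₄) / Φ :=
    calc variance n₀ n t k p X / a ^ 2 + variance n₀ n t k p N / b ^ 2
        ≤ K₂ * b / a ^ 2 + K₄ * (μ ^ 4 / Φ ^ 3) / b ^ 2 := by gcongr
      _ = (4 * κ ^ 2 * K₂ + K₄) / Φ := by rw [ha, hb]; field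
  refine (sub_le_sub_left hbound 1).trans <|
    (one_sub_variance_div_add_le_prOmega hp₀ hp₁ X N ha₀ hb₀).trans <|
      prOmega_mono hp₀ hp₁ fun ω ⟨hXω, hNω⟩ => ?_
  have hX : a ≤ X ω := by
    have : 2 * a ≤ expec n₀ n t k p X := by
      calc 2 * a = μ / κ := by rw [ha]; field
        _ ≤ expec n₀ n t k p X := (div_le_iff₀' hκ).2 hEX
    linarith [(abs_lt.1 hXω).1]
  have hN : N ω ≤ (K₂ + 1) * b := by linarith [(abs_lt.1 hNω).2]
  refine le_of_mul_le_mul_right ?_ (show 0 < (K₂ + 1) * b by positivity)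
  calc 1 / (4 * κ ^ 2 * (K₂ + 1)) * Φ * ((K₂ + 1) * b) = a ^ 2 := by rw [ha, hb]; field
    _ ≤ X ω ^ 2 := by gcongr
    _ ≤ D ω * N ω := hDN ω
    _ ≤ D ω * ((K₂ + 1) * b) := mul_le_mul_of_nonneg_left hN (hD ω)

end Probability

section HostGraph

/-- The vertices of the host `K`. -/
abbrev HostVertex (n₀ n t : ℕ) := Fin n₀ ⊕ SideV n t

/-- The two endvertices of an edge slot of `K`. -/
def hostEnds : EdgeSlot n₀ n t k → Sym2 (HostVertex n₀ n t) :=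
  Sum.elim (fun e => s(.inl e.1, .inr e.2.1)) (Sym2.map .inr)

/-- The size of the vertex class of `K` containing a vertex. -/
def classSize : HostVertex n₀ n t → ℕ := Sum.elim (fun _ => n₀) fun _ => n

/-- A set of vertices and a set of edge slots of `K`, ordered componentwise; unions and
intersections of subgraphs of `K` are then `⊔` and `⊓`. -/
abbrev HostGraph (n₀ n t k : ℕ) := Finset (HostVertex n₀ n t) × Finset (EdgeSlot n₀ n t k)

/-- The pair of sets is a graph: it contains the endvertices of its edges. -/
def IsSubgraph (S : HostGraph n₀ n t k) : Prop := ∀ e ∈ S.2, ∀ v ∈ hostEnds e, v ∈ S.1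

lemma IsSubgraph.sup {S T : HostGraph n₀ n t k} (hS : IsSubgraph S) (hT : IsSubgraph T) :
    IsSubgraph (S ⊔ T) := fun e he v hv =>
  mem_union.2 <| (mem_union.1 he).imp (fun h => hS e h v hv) fun h => hT e h v hv

lemma IsSubgraph.inf {S T : HostGraph n₀ n t k} (hS : IsSubgraph S) (hT : IsSubgraph T) :
    IsSubgraph (S ⊓ T) := fun e he v hv =>
  mem_inter.2 <| (mem_inter.1 he).imp (fun h => hS e h v hv) fun h => hT e h v hv

/-- Two subgraphs of `K` share a vertex. -/
def Meets (S T : HostGraph n₀ n t k) : Prop := ¬ Disjoint S.1 T.1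

instance : DecidableRel (Meets (n₀ := n₀) (n := n) (t := t) (k := k)) :=
  fun S T => inferInstanceAs (Decidable (¬ Disjoint S.1 T.1))

lemma Meets.symm {S T : HostGraph n₀ n t k} (h : Meets S T) : Meets T S :=
  fun h' => h h'.symm

lemma meets_of_not_disjoint_edges {S T : HostGraph n₀ n t k} (hS : IsSubgraph S)
    (hT : IsSubgraph T) (h : ¬ Disjoint S.2 T.2) : Meets S T := by
  obtain ⟨e, heS, heT⟩ := not_disjoint_iff.1 h
  obtain ⟨v, hv⟩ : ∃ v, v ∈ hostEnds e := ⟨_, Sym2.out_fst_mem _⟩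
  exact not_disjoint_iff.2 ⟨v, hS e heS v hv, hT e heT v hv⟩

lemma meets_sup_iff {S T U : HostGraph n₀ n t k} :
    Meets S (T ⊔ U) ↔ Meets S T ∨ Meets S U := by
  simp only [Meets, Prod.fst_sup, sup_eq_union, disjoint_union_right, not_and_or]

/-- Up to a bounded factor, the expected number of copies in the random multigraph of a graph
isomorphic to `S` (respecting the vertex classes). -/
def weight (p : ℝ) (S : HostGraph n₀ n t k) : ℝ := (∏ v ∈ S.1, (classSize v : ℝ)) * p ^ #S.2

lemma weight_nonneg (hp : 0 ≤ p) (S : HostGraph n₀ n t k) : 0 ≤ weight p S := by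
  unfold weight; positivity

lemma weight_sup_mul_weight_inf (p : ℝ) (S T : HostGraph n₀ n t k) :
    weight p (S ⊔ T) * weight p (S ⊓ T) = weight p S * weight p T := by
  simp only [weight, Prod.fst_sup, Prod.snd_sup, Prod.fst_inf, Prod.snd_inf, sup_eq_union,
    inf_eq_inter]
  rw [mul_mul_mul_comm, prod_union_inter, ← pow_add, card_union_add_card_inter, pow_add,
    mul_mul_mul_comm]

end HostGraph

section Family

variable {A ι : Type*}

/-- The union of two members of a family of subgraphs of `K`. -/
def pairSup (S : A → HostGraph n₀ n t k) (z : A × A) : HostGraph n₀ n t k := S z.1 ⊔ S z.2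

/-- The pairs of indices in `J` for which the two members of a family of subgraphs of `K` share
a vertex. -/
def overlapPairs (J : Finset A) (S : A → HostGraph n₀ n t k) : Finset (A × A) :=
  {z ∈ J ×ˢ J | Meets (S z.1) (S z.2)}

lemma mem_overlapPairs {J : Finset A} {S : A → HostGraph n₀ n t k} {z : A × A} :
    z ∈ overlapPairs J S ↔ (z.1 ∈ J ∧ z.2 ∈ J) ∧ Meets (S z.1) (S z.2) := by
  rw [overlapPairs, mem_filter, mem_product]

lemma variance_presentCount_le_sum_overlapPairs (hp : 0 ≤ p) (J : Finset A)
    {S : A → HostGraph n₀ n t k} (hS : ∀ j, IsSubgraph (S j)) :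
    variance n₀ n t k p (fun ω => presentCount J (fun j => (S j).2) ω) ≤
      ∑ z ∈ overlapPairs J S, p ^ #(pairSup S z).2 :=
  variance_presentCount_le J _ hp fun _ hz hdisj =>
    mem_filter.2 ⟨hz, meets_of_not_disjoint_edges (hS _) (hS _) hdisj⟩

/-- The `i`-th vertex of the graph `S j` is `T j i`; the vertices of `S j` determine `j`, and the
`i`-th vertex lies in the fixed vertex class `B i` of `K`. -/
structure ListsVertices [Fintype ι] (S : A → HostGraph n₀ n t k)
    (T : A → ι → HostVertex n₀ n t) (B : ι → Finset (HostVertex n₀ n t)) : Prop where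
  injective : Function.Injective T
  image_eq : ∀ j, univ.image (T j) = (S j).1
  mem_class : ∀ j i, T j i ∈ B i
  card_class : ∀ i, ∀ v ∈ B i, #(B i) = classSize v

lemma ListsVertices.pairSup [Fintype ι] {S : A → HostGraph n₀ n t k}
    {T : A → ι → HostVertex n₀ n t} {B : ι → Finset (HostVertex n₀ n t)}
    (h : ListsVertices S T B) :
    ListsVertices (pairSup S) (fun z => Sum.elim (T z.1) (T z.2)) (Sum.elim B B) where
  injective z z' hz := Prod.ext
    (h.injective (funext fun i => congrFun hz (.inl i)))
    (h.injective (funext fun i => congrFun hz (.inr i)))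
  image_eq z := by
    simp only [PartiteModel.pairSup, Prod.fst_sup, ← h.image_eq]
    ext
    simp
  mem_class z := Sum.forall.2 ⟨h.mem_class z.1, h.mem_class z.2⟩
  card_class := Sum.forall.2 ⟨h.card_class, h.card_class⟩

lemma ListsVertices.sum_pow_card_le [Fintype ι] {S : A → HostGraph n₀ n t k}
    {T : A → ι → HostVertex n₀ n t} {B : ι → Finset (HostVertex n₀ n t)}
    (h : ListsVertices S T B) {J : Finset A} {M : ℝ} (hM : 0 ≤ M)
    (hweight : ∀ j ∈ J, weight p (S j) ≤ M) :
    ∑ j ∈ J, p ^ #(S j).2 ≤ (Fintype.card ι).factorial * M := by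
  refine sum_le_factorial_mul_of_injOn (w := fun v => (classSize v : ℝ))
    (fun v => Nat.cast_nonneg _) B (fun i v hv => by rw [h.card_class i v hv])
    h.injective.injOn (fun j _ i => h.mem_class j i) hM fun j hj => ?_
  rw [h.image_eq]
  exact hweight j hj

end Family

section ClassEmbedding

variable {U₀ : Type*} {U : Fin t → Type*}

/-- The vertices of a `(t+1)`-partite multigraph with vertex classes `U₀` and `U i`. -/
abbrev ClassVertex (U₀ : Type*) (U : Fin t → Type*) := U₀ ⊕ Σ i, U i

/-- The possible edges of a `(t+1)`-partite multigraph with vertex classes `U₀` and `U i`,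
encoded as in `Pattern`. -/
abbrev ClassEdge (k : ℕ) (U₀ : Type*) (U : Fin t → Type*) :=
  (U₀ × Σ i, U i × Lab k) ⊕ Sym2 (Σ i, U i)

/-- The two endvertices of an edge. -/
def classEnds : ClassEdge k U₀ U → Sym2 (ClassVertex U₀ U) :=
  Sum.elim (fun z => s(.inl z.1, .inr ⟨z.2.1, z.2.2.1⟩)) (Sym2.map .inr)

/-- Injections of the vertex classes `U₀` and `U i` into the vertex classes of `K`. -/
abbrev ClassEmbedding (n₀ n : ℕ) (U₀ : Type*) (U : Fin t → Type*) :=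
  (U₀ ↪ Fin n₀) × ∀ i, U i ↪ Fin n

lemma card_classEmbedding [Fintype U₀] [∀ i, Fintype (U i)] :
    Fintype.card (ClassEmbedding n₀ n U₀ U) =
      n₀.descFactorial (Fintype.card U₀) * ∏ i, n.descFactorial (Fintype.card (U i)) := by
  simp [Fintype.card_embedding_eq]

namespace ClassEmbedding

/-- The map on the vertices outside the class `U₀`. -/
def sideMap (c : ClassEmbedding n₀ n U₀ U) : (Σ i, U i) ↪ SideV n t where
  toFun y := (y.1, c.2 y.1 y.2)
  inj' := by
    rintro ⟨i, b⟩ ⟨j, b'⟩ h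
    simp only [Prod.mk.injEq] at h
    obtain ⟨rfl, hb⟩ := h
    rw [(c.2 i).injective hb]

/-- The map on vertices. -/
def vertexMap (c : ClassEmbedding n₀ n U₀ U) : ClassVertex U₀ U ↪ HostVertex n₀ n t :=
  c.1.sumMap c.sideMap

/-- The map on labelled edges. -/
def labelledEdgeMap (c : ClassEmbedding n₀ n U₀ U) :
    (U₀ × Σ i, U i × Lab k) ↪ Fin n₀ × SideV n t × Lab k where
  toFun z := (c.1 z.1, (z.2.1, c.2 z.2.1 z.2.2.1), z.2.2.2)
  inj' := by
    rintro ⟨a, i, b, l⟩ ⟨a', j, b', l'⟩ h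
    simp only [Prod.mk.injEq] at h
    obtain ⟨ha, ⟨rfl, hb⟩, rfl⟩ := h
    rw [c.1.injective ha, (c.2 i).injective hb]

/-- The map on edges. -/
def edgeMap (c : ClassEmbedding n₀ n U₀ U) : ClassEdge k U₀ U ↪ EdgeSlot n₀ n t k :=
  c.labelledEdgeMap.sumMap c.sideMap.sym2Map

lemma hostEnds_edgeMap (c : ClassEmbedding n₀ n U₀ U) (e : ClassEdge k U₀ U) :
    hostEnds (c.edgeMap e) = (classEnds e).map c.vertexMap := by
  rcases e with z | e
  · rfl
  · change (e.map c.sideMap).map .inr = (e.map .inr).map c.vertexMap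
    simp only [Sym2.map_map]
    rfl

lemma vertexMap_injective :
    Function.Injective fun c : ClassEmbedding n₀ n U₀ U => c.vertexMap := by
  intro c c' h
  have happ (v : ClassVertex U₀ U) : c.vertexMap v = c'.vertexMap v := DFunLike.congr_fun h v
  refine Prod.ext (DFunLike.ext _ _ fun a => ?_) (funext fun i => DFunLike.ext _ _ fun b => ?_)
  · exact Sum.inl_injective (happ (.inl a))
  · exact (Prod.mk.inj (Sum.inr_injective (happ (.inr ⟨i, b⟩)))).2

/-- The vertices of `K` in the class into which a vertex is mapped. -/
def hostClass : ClassVertex U₀ U → Finset (HostVertex n₀ n t) :=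
  Sum.elim (fun _ => univ.map .inl) fun y => (univ.map (.sectR y.1 (Fin n))).map .inr

lemma vertexMap_mem_hostClass (c : ClassEmbedding n₀ n U₀ U) (v : ClassVertex U₀ U) :
    c.vertexMap v ∈ hostClass v := by
  rcases v with a | y
  · exact mem_map_of_mem _ (mem_univ _)
  · exact mem_map_of_mem _ (mem_map_of_mem _ (mem_univ (c.2 y.1 y.2)))

lemma card_hostClass_eq_classSize {v : ClassVertex U₀ U} {x : HostVertex n₀ n t}
    (hx : x ∈ hostClass v) : #(hostClass v : Finset (HostVertex n₀ n t)) = classSize x := by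
  rcases v with a | y <;> rcases x with x | x <;> simp_all [hostClass, classSize]

end ClassEmbedding

end ClassEmbedding

variable {G : Pattern t k}

/-- The vertices of the pattern `G`. -/
abbrev Pattern.Vertex (G : Pattern t k) := ClassVertex (Fin G.m0) fun i => Fin (G.m i)

/-- The type containing the edges of the pattern `G`. -/
abbrev Pattern.Edge (G : Pattern t k) := ClassEdge k (Fin G.m0) fun i => Fin (G.m i)

/-- The edges of the pattern `G`. -/
def Pattern.edges (G : Pattern t k) : Finset G.Edge := G.e0.disjSum G.e1

/-- The copies of `G` in the host `K`: the `CopyMap`s which are injective on each class. -/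
abbrev Placement (G : Pattern t k) (n₀ n : ℕ) :=
  ClassEmbedding n₀ n (Fin G.m0) fun i => Fin (G.m i)

namespace Placement

/-- The `CopyMap` underlying a placement. -/
def toCopyMap (c : Placement G n₀ n) : CopyMap G n₀ n := ⟨c.1, fun i => c.2 i⟩

/-- The subgraph of `K` occupied by a placement. -/
def image (c : Placement G n₀ n) : HostGraph n₀ n t k :=
  (univ.map c.vertexMap, G.edges.map c.edgeMap)

lemma isSubgraph_image (c : Placement G n₀ n) : IsSubgraph c.image := by
  intro x hx v hv
  obtain ⟨e, -, rfl⟩ := mem_map.1 hx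
  rw [ClassEmbedding.hostEnds_edgeMap] at hv
  obtain ⟨u, -, rfl⟩ := Sym2.mem_map.1 hv
  exact mem_map_of_mem _ (mem_univ u)

lemma isGoodCopy_toCopyMap {ω : Omega n₀ n t k} {c : Placement G n₀ n}
    (h : ∀ e ∈ c.image.2, ω e = true) : IsGoodCopy G ω c.toCopyMap :=
  ⟨c.1.injective, fun i => (c.2 i).injective,
    fun _ hz => h _ (mem_map_of_mem c.edgeMap (inl_mem_disjSum.2 hz)),
    fun _ he => h _ (mem_map_of_mem c.edgeMap (inr_mem_disjSum.2 he))⟩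

lemma disjointCopies_toCopyMap {c c' : Placement G n₀ n} (h : ¬ Meets c.image c'.image) :
    DisjointCopies c.toCopyMap c'.toCopyMap := by
  have hne (v v' : G.Vertex) : c.vertexMap v ≠ c'.vertexMap v' :=
    disjoint_left.1 (not_not.1 h) (mem_map_of_mem _ (mem_univ v)) |>.imp fun h' =>
      h' ▸ mem_map_of_mem _ (mem_univ v')
  exact ⟨fun a a' h' => hne (.inl a) (.inl a') (congrArg _ h'), fun i b b' h' =>
    hne (.inr ⟨i, b⟩) (.inr ⟨i, b'⟩) (congrArg (fun x => Sum.inr (i, x)) h')⟩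

end Placement

namespace Subpattern

/-- The vertices of a subpattern. -/
def vertexSet (H : Subpattern G) : Finset G.Vertex := H.s0.disjSum (univ.sigma H.s)

/-- The edges of a subpattern. -/
def edgeSet (H : Subpattern G) : Finset G.Edge := H.f0.disjSum H.f1

/-- The copies of a subpattern in the host `K`. -/
abbrev Embedding (H : Subpattern G) (n₀ n : ℕ) := ClassEmbedding n₀ n H.s0 fun i => H.s i

/-- An edge between vertices of a subpattern `H`, as an edge between vertices of `G`. -/
def edgeVal (H : Subpattern G) : ClassEdge k H.s0 (fun i => H.s i) → G.Edge :=
  Sum.map (fun z => (z.1, ⟨z.2.1, z.2.2.1, z.2.2.2⟩)) (Sym2.map fun y => ⟨y.1, y.2⟩)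

open scoped Classical in
/-- The edges of a subpattern, as edges between its own vertices. -/
noncomputable def edges (H : Subpattern G) : Finset (ClassEdge k H.s0 fun i => H.s i) :=
  {e | H.edgeVal e ∈ H.edgeSet}

lemma mem_edges {H : Subpattern G} {e : ClassEdge k H.s0 fun i => H.s i} :
    e ∈ H.edges ↔ H.edgeVal e ∈ H.edgeSet := by
  simp only [edges, mem_filter_univ]

lemma card_edgeSet_le_card_edges (H : Subpattern G) : #H.edgeSet ≤ #H.edges := by
  classical
  suffices h : H.edgeSet ⊆ H.edges.image H.edgeVal from (card_le_card h).trans card_image_le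
  suffices h : ∀ e ∈ H.edgeSet, ∃ e', H.edgeVal e' = e from fun e he => by
    obtain ⟨e', rfl⟩ := h e he
    exact mem_image_of_mem _ (mem_edges.2 he)
  rintro (z | e) he
  · have hz := H.f0mem z (inl_mem_disjSum.1 he)
    exact ⟨.inl (⟨z.1, hz.1⟩, ⟨z.2.1, ⟨z.2.2.1, hz.2⟩, z.2.2.2⟩), rfl⟩
  · have hmem := H.f1mem e (inr_mem_disjSum.1 he)
    induction e with | _ x y
    have hx := hmem x (Sym2.mem_mk_left x y)
    have hy := hmem y (Sym2.mem_mk_right x y)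
    exact ⟨.inr s(⟨x.1, x.2, hx⟩, ⟨y.1, y.2, hy⟩), rfl⟩

/-- The `SubCopyMap` underlying an embedding of a subpattern. -/
def Embedding.toSubCopyMap {H : Subpattern G} (c : H.Embedding n₀ n) : SubCopyMap H n₀ n :=
  ⟨c.1, fun i => c.2 i⟩

lemma XSub_le_presentCount (H : Subpattern G) (ω : Omega n₀ n t k) :
    XSub H n₀ n ω ≤
      presentCount univ (fun c : H.Embedding n₀ n => H.edges.map c.edgeMap) ω := by
  set J := univ.filter fun c : H.Embedding n₀ n => ∀ e ∈ H.edges.map c.edgeMap, ω e = true with hJ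
  have hsub : {c | IsGoodSubCopy H ω c} ⊆
      Embedding.toSubCopyMap '' (J : Set (H.Embedding n₀ n)) := by
    rintro ⟨f₀, f⟩ ⟨hf₀, hf, hω₀, hω₁⟩
    refine ⟨(⟨f₀, hf₀⟩, fun i => ⟨f i, hf i⟩), ?_, rfl⟩
    simp only [hJ, coe_filter, mem_univ, true_and, Set.mem_ofPred_eq, forall_mem_map]
    rintro (z | e) he
    · exact hω₀ _ (inl_mem_disjSum.1 (mem_edges.1 he))
    · induction e with | _ x y
      exact hω₁ _ (inr_mem_disjSum.1 (mem_edges.1 he)) ⟨x.1, x.2⟩ ⟨y.1, y.2⟩ rfl x.2.2 y.2.2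
  have hncard : {c | IsGoodSubCopy H ω c}.ncard ≤ #J :=
    ((Set.ncard_le_ncard hsub).trans Set.ncard_image_le).trans_eq (Set.ncard_coe_finset J)
  simpa only [XSub, presentCount, Nat.cast_le] using hncard

lemma expec_XSub_nonneg (hp₀ : 0 ≤ p) (hp₁ : p ≤ 1) (H : Subpattern G) :
    0 ≤ expec n₀ n t k p (XSub H n₀ n) :=
  expec_nonneg hp₀ hp₁ fun _ => Nat.cast_nonneg _

lemma expec_XSub_le (hp₀ : 0 ≤ p) (hp₁ : p ≤ 1) (H : Subpattern G) :
    expec n₀ n t k p (XSub H n₀ n) ≤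
      (n₀.descFactorial #H.s0 * ∏ i, n.descFactorial #(H.s i) : ℕ) * p ^ #H.edgeSet := by
  calc expec n₀ n t k p (XSub H n₀ n)
      ≤ ∑ c : H.Embedding n₀ n, p ^ #(H.edges.map c.edgeMap) :=
        (expec_mono hp₀ hp₁ H.XSub_le_presentCount).trans_eq (expec_presentCount _ _)
    _ = (n₀.descFactorial #H.s0 * ∏ i, n.descFactorial #(H.s i) : ℕ) * p ^ #H.edges := by
        simp only [card_map, sum_const, card_univ, card_classEmbedding, Fintype.card_coe,
          nsmul_eq_mul]
    _ ≤ _ := by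
        gcongr ?_ * ?_
        exact pow_le_pow_of_le_one hp₀ hp₁ H.card_edgeSet_le_card_edges

/-- The subgraph of `K` which a placement of `G` assigns to a subpattern. -/
def image (H : Subpattern G) (c : Placement G n₀ n) : HostGraph n₀ n t k :=
  (H.vertexSet.map c.vertexMap, H.edgeSet.map c.edgeMap)

lemma weight_image (H : Subpattern G) (c : Placement G n₀ n) :
    weight p (H.image c) = (n₀ ^ #H.s0 * ∏ i, n ^ #(H.s i) : ℕ) * p ^ #H.edgeSet := by
  simp only [weight, image, prod_map, card_map, vertexSet, prod_disjSum, prod_sigma]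
  simp [classSize, ClassEmbedding.vertexMap]

lemma expec_XSub_le_weight_image (hp₀ : 0 ≤ p) (hp₁ : p ≤ 1) (H : Subpattern G)
    (c : Placement G n₀ n) : expec n₀ n t k p (XSub H n₀ n) ≤ weight p (H.image c) := by
  rw [weight_image]
  refine (H.expec_XSub_le hp₀ hp₁).trans ?_
  gcongr <;> exact Nat.descFactorial_le_pow _ _

/-- The pattern `G` as a subpattern of itself. -/
instance : Top (Subpattern G) where
  top := ⟨univ, fun _ => univ, G.e0, G.e1, Subset.rfl, Subset.rfl,
    fun _ _ => ⟨mem_univ _, mem_univ _⟩, fun _ _ _ _ => mem_univ _⟩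

lemma vertexSet_top : (⊤ : Subpattern G).vertexSet = univ := by
  ext (a | y) <;> simp [vertexSet, Top.top]

lemma image_top (c : Placement G n₀ n) : (⊤ : Subpattern G).image c = c.image := by
  simp only [image, vertexSet_top]
  rfl

lemma exists_image_eq {S : HostGraph n₀ n t k} (hS : IsSubgraph S) {c : Placement G n₀ n}
    (hSc : S ≤ c.image) : ∃ H : Subpattern G, H.image c = S := by
  classical
  have hends {e : G.Edge} (he : c.edgeMap e ∈ S.2) {v : G.Vertex} (hv : v ∈ classEnds e) :
      c.vertexMap v ∈ S.1 :=
    hS _ he _ (c.hostEnds_edgeMap e ▸ Sym2.mem_map.2 ⟨v, hv, rfl⟩)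
  let H : Subpattern G :=
    { s0 := {a | c.vertexMap (.inl a) ∈ S.1}
      s i := {b | c.vertexMap (.inr ⟨i, b⟩) ∈ S.1}
      f0 := {z ∈ G.e0 | c.edgeMap (.inl z) ∈ S.2}
      f1 := {e ∈ G.e1 | c.edgeMap (.inr e) ∈ S.2}
      f0sub := filter_subset _ _
      f1sub := filter_subset _ _
      f0mem z hz := by
        have := (mem_filter.1 hz).2
        simp only [mem_filter_univ]
        exact ⟨hends this (Sym2.mem_mk_left _ _), hends this (Sym2.mem_mk_right _ _)⟩
      f1mem e he y hy := by
        rw [mem_filter_univ]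
        exact hends (mem_filter.1 he).2 (v := .inr y) (Sym2.mem_map.2 ⟨y, hy, rfl⟩) }
  have hV : H.vertexSet = univ.filter fun v => c.vertexMap v ∈ S.1 := by
    ext (a | y) <;> simp [vertexSet, H]
  have hE : H.edgeSet = G.edges.filter fun e => c.edgeMap e ∈ S.2 := by
    ext (z | e) <;> simp [edgeSet, Pattern.edges, H]
  refine ⟨H, Prod.ext ?_ ?_⟩
  · calc H.vertexSet.map c.vertexMap = (univ.map c.vertexMap).filter (· ∈ S.1) := by
          rw [hV, filter_map]; rfl
      _ = S.1 := by rw [filter_mem_eq_inter]; exact inter_eq_right.2 hSc.1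
  · calc H.edgeSet.map c.edgeMap = (G.edges.map c.edgeMap).filter (· ∈ S.2) := by
          rw [hE, filter_map]; rfl
      _ = S.2 := by rw [filter_mem_eq_inter]; exact inter_eq_right.2 hSc.2

end Subpattern

section PhiV

lemma PhiV_nonneg (hp₀ : 0 ≤ p) (hp₁ : p ≤ 1) : 0 ≤ PhiV n₀ n p G := by
  refine Real.sInf_nonneg ?_
  rintro _ ⟨H, -, rfl⟩
  exact H.expec_XSub_nonneg hp₀ hp₁

lemma PhiV_le_expec_XSub (hp₀ : 0 ≤ p) (hp₁ : p ≤ 1) {H : Subpattern G}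
    (hH : H.vertexSet.Nonempty) : PhiV n₀ n p G ≤ expec n₀ n t k p (XSub H n₀ n) := by
  refine csInf_le ⟨0, ?_⟩ ⟨H, ?_, rfl⟩
  · rintro _ ⟨H', -, rfl⟩
    exact H'.expec_XSub_nonneg hp₀ hp₁
  · obtain ⟨a | y, hv⟩ := hH
    · exact .inl ⟨a, inl_mem_disjSum.1 hv⟩
    · exact .inr ⟨y.1, y.2, (mem_sigma.1 (inr_mem_disjSum.1 hv)).2⟩

lemma PhiV_le_weight (hp₀ : 0 ≤ p) (hp₁ : p ≤ 1) {S : HostGraph n₀ n t k} (hS : IsSubgraph S)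
    (hne : S.1.Nonempty) {c : Placement G n₀ n} (hSc : S ≤ c.image) :
    PhiV n₀ n p G ≤ weight p S := by
  obtain ⟨H, rfl⟩ := Subpattern.exists_image_eq hS hSc
  exact (PhiV_le_expec_XSub hp₀ hp₁ (map_nonempty.1 hne)).trans
    (H.expec_XSub_le_weight_image hp₀ hp₁ c)

lemma nonempty_vertex_of_PhiV_pos (hΦ : 0 < PhiV n₀ n p G) : Nonempty G.Vertex := by
  have hne := Set.nonempty_iff_ne_empty.2 fun h => hΦ.ne' ((congrArg sInf h).trans Real.sInf_empty)
  obtain ⟨_, H, ⟨a, -⟩ | ⟨i, b, -⟩, -⟩ := hne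
  exacts [⟨.inl a⟩, ⟨.inr ⟨i, b⟩⟩]

lemma descFactorial_pos_of_PhiV_pos (hp₀ : 0 ≤ p) (hp₁ : p ≤ 1) (hΦ : 0 < PhiV n₀ n p G) :
    0 < ((n₀.descFactorial G.m0 * ∏ i, n.descFactorial (G.m i) : ℕ) : ℝ) * p ^ #G.edges := by
  have := nonempty_vertex_of_PhiV_pos hΦ
  have hne : (⊤ : Subpattern G).vertexSet.Nonempty := by
    rw [Subpattern.vertexSet_top]; exact univ_nonempty
  have hpos := hΦ.trans_le
    ((PhiV_le_expec_XSub hp₀ hp₁ hne).trans (Subpattern.expec_XSub_le hp₀ hp₁ _))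
  simpa [Top.top, Subpattern.edgeSet, Pattern.edges] using hpos

lemma le_of_PhiV_pos (hp₀ : 0 ≤ p) (hp₁ : p ≤ 1) (hΦ : 0 < PhiV n₀ n p G) :
    G.m0 ≤ n₀ ∧ ∀ i, G.m i ≤ n := by
  have hne := left_ne_zero_of_mul (descFactorial_pos_of_PhiV_pos hp₀ hp₁ hΦ).ne'
  rw [Nat.cast_ne_zero, mul_ne_zero_iff, prod_ne_zero_iff] at hne
  simpa [Nat.descFactorial_eq_zero_iff_lt] using hne

end PhiV

section Overlaps

/-- Up to a constant factor, the expected number of copies of `G`. -/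
def Pattern.scale (G : Pattern t k) (n₀ n : ℕ) (p : ℝ) : ℝ :=
  (n₀ ^ G.m0 * ∏ i, n ^ G.m i : ℕ) * p ^ #G.edges

lemma Pattern.scale_nonneg (hp : 0 ≤ p) : 0 ≤ G.scale n₀ n p := by
  unfold scale; positivity

lemma scale_pos_of_PhiV_pos (hp₀ : 0 ≤ p) (hp₁ : p ≤ 1) (hΦ : 0 < PhiV n₀ n p G) :
    0 < G.scale n₀ n p := by
  refine (descFactorial_pos_of_PhiV_pos hp₀ hp₁ hΦ).trans_le ?_
  unfold Pattern.scale
  gcongr <;> exact Nat.descFactorial_le_pow _ _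

lemma Placement.weight_image (c : Placement G n₀ n) : weight p c.image = G.scale n₀ n p := by
  rw [← Subpattern.image_top, Subpattern.weight_image]
  simp [Pattern.scale, Top.top, Subpattern.edgeSet, Pattern.edges]

lemma weight_sup_image_mul_PhiV_le (hp₀ : 0 ≤ p) (hp₁ : p ≤ 1) {S : HostGraph n₀ n t k}
    (hS : IsSubgraph S) {c : Placement G n₀ n} (hSc : Meets S c.image) :
    weight p (S ⊔ c.image) * PhiV n₀ n p G ≤ weight p S * G.scale n₀ n p := by
  rw [← c.weight_image, ← weight_sup_mul_weight_inf]
  exact mul_le_mul_of_nonneg_left (PhiV_le_weight hp₀ hp₁ (hS.inf c.isSubgraph_image)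
    (not_disjoint_iff_nonempty_inter.1 hSc) inf_le_right) (weight_nonneg hp₀ _)

/-- The ordered pairs of copies of `G` sharing a vertex. -/
noncomputable def overlappingPairs (G : Pattern t k) (n₀ n : ℕ) :
    Finset (Placement G n₀ n × Placement G n₀ n) :=
  overlapPairs univ Placement.image

lemma weight_pairSup_mul_PhiV_le (hp₀ : 0 ≤ p) (hp₁ : p ≤ 1)
    {z : Placement G n₀ n × Placement G n₀ n} (hz : Meets z.1.image z.2.image) :
    weight p (pairSup Placement.image z) * PhiV n₀ n p G ≤ G.scale n₀ n p ^ 2 :=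
  calc weight p (z.1.image ⊔ z.2.image) * PhiV n₀ n p G
      ≤ weight p z.1.image * G.scale n₀ n p :=
        weight_sup_image_mul_PhiV_le hp₀ hp₁ z.1.isSubgraph_image hz
    _ = G.scale n₀ n p ^ 2 := by rw [z.1.weight_image, sq]

lemma weight_sup_pairSup_mul_PhiV_sq_le (hp₀ : 0 ≤ p) (hp₁ : p ≤ 1) {S : HostGraph n₀ n t k}
    (hS : IsSubgraph S) {z : Placement G n₀ n × Placement G n₀ n}
    (hz : Meets z.1.image z.2.image) (hSz : Meets S (pairSup Placement.image z)) :
    weight p (S ⊔ pairSup Placement.image z) * PhiV n₀ n p G ^ 2 ≤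
      weight p S * G.scale n₀ n p ^ 2 := by
  wlog hc : Meets S z.1.image generalizing z
  · have hswap : pairSup Placement.image z.swap = pairSup Placement.image z := sup_comm _ _
    rw [← hswap] at hSz ⊢
    exact this hz.symm hSz ((meets_sup_iff.1 hSz).resolve_right hc)
  have hc' : Meets (S ⊔ z.1.image) z.2.image := (meets_sup_iff.2 (.inr hz.symm)).symm
  calc weight p (S ⊔ pairSup Placement.image z) * PhiV n₀ n p G ^ 2
      = weight p (S ⊔ z.1.image ⊔ z.2.image) * PhiV n₀ n p G * PhiV n₀ n p G := by
        rw [pairSup, sup_assoc, sq, mul_assoc]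
    _ ≤ weight p (S ⊔ z.1.image) * G.scale n₀ n p * PhiV n₀ n p G :=
        mul_le_mul_of_nonneg_right (weight_sup_image_mul_PhiV_le hp₀ hp₁
          (hS.sup z.1.isSubgraph_image) hc') (PhiV_nonneg hp₀ hp₁)
    _ = weight p (S ⊔ z.1.image) * PhiV n₀ n p G * G.scale n₀ n p := mul_right_comm _ _ _
    _ ≤ weight p S * G.scale n₀ n p * G.scale n₀ n p :=
        mul_le_mul_of_nonneg_right (weight_sup_image_mul_PhiV_le hp₀ hp₁ hS hc)
          (Pattern.scale_nonneg hp₀)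
    _ = weight p S * G.scale n₀ n p ^ 2 := by rw [sq, mul_assoc]

lemma weight_pairSup_pairSup_mul_PhiV_pow_le (hp₀ : 0 ≤ p) (hp₁ : p ≤ 1)
    {w : (Placement G n₀ n × Placement G n₀ n) × (Placement G n₀ n × Placement G n₀ n)}
    (hw₁ : Meets w.1.1.image w.1.2.image) (hw₂ : Meets w.2.1.image w.2.2.image)
    (hw : Meets (pairSup Placement.image w.1) (pairSup Placement.image w.2)) :
    weight p (pairSup (pairSup Placement.image) w) * PhiV n₀ n p G ^ 3 ≤ G.scale n₀ n p ^ 4 := by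
  have hsub : IsSubgraph (pairSup Placement.image w.1) :=
    w.1.1.isSubgraph_image.sup w.1.2.isSubgraph_image
  calc weight p (pairSup Placement.image w.1 ⊔ pairSup Placement.image w.2) * PhiV n₀ n p G ^ 3
      = weight p (pairSup Placement.image w.1 ⊔ pairSup Placement.image w.2) *
          PhiV n₀ n p G ^ 2 * PhiV n₀ n p G := by ring
    _ ≤ weight p (pairSup Placement.image w.1) * G.scale n₀ n p ^ 2 * PhiV n₀ n p G :=
        mul_le_mul_of_nonneg_right (weight_sup_pairSup_mul_PhiV_sq_le hp₀ hp₁ hsub hw₂ hw)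
          (PhiV_nonneg hp₀ hp₁)
    _ = weight p (pairSup Placement.image w.1) * PhiV n₀ n p G * G.scale n₀ n p ^ 2 :=
        mul_right_comm _ _ _
    _ ≤ G.scale n₀ n p ^ 2 * G.scale n₀ n p ^ 2 :=
        mul_le_mul_of_nonneg_right (weight_pairSup_mul_PhiV_le hp₀ hp₁ hw₁) (sq_nonneg _)
    _ = G.scale n₀ n p ^ 4 := by ring

lemma listsVertices_image :
    ListsVertices Placement.image (fun c : Placement G n₀ n => c.vertexMap)
      ClassEmbedding.hostClass where
  injective _ _ h := ClassEmbedding.vertexMap_injective (DFunLike.coe_injective h)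
  image_eq c := by rw [Placement.image, map_eq_image]
  mem_class c := c.vertexMap_mem_hostClass
  card_class _ _ hv := ClassEmbedding.card_hostClass_eq_classSize hv

lemma sum_overlappingPairs_le (hp₀ : 0 ≤ p) (hp₁ : p ≤ 1) (hΦ : 0 < PhiV n₀ n p G) :
    ∑ z ∈ overlappingPairs G n₀ n, p ^ #(pairSup Placement.image z).2 ≤
      (2 * Fintype.card G.Vertex).factorial * (G.scale n₀ n p ^ 2 / PhiV n₀ n p G) := by
  have hcard : Fintype.card (G.Vertex ⊕ G.Vertex) = 2 * Fintype.card G.Vertex := by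
    rw [Fintype.card_sum, two_mul]
  rw [← hcard]
  refine listsVertices_image.pairSup.sum_pow_card_le (by positivity) fun z hz => ?_
  exact (le_div_iff₀ hΦ).2 (weight_pairSup_mul_PhiV_le hp₀ hp₁ (mem_overlapPairs.1 hz).2)

lemma sum_overlapPairs_overlappingPairs_le (hp₀ : 0 ≤ p) (hp₁ : p ≤ 1)
    (hΦ : 0 < PhiV n₀ n p G) :
    ∑ w ∈ overlapPairs (overlappingPairs G n₀ n) (pairSup Placement.image),
        p ^ #(pairSup (pairSup Placement.image) w).2 ≤
      (4 * Fintype.card G.Vertex).factorial * (G.scale n₀ n p ^ 4 / PhiV n₀ n p G ^ 3) := by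
  have hcard : Fintype.card ((G.Vertex ⊕ G.Vertex) ⊕ (G.Vertex ⊕ G.Vertex)) =
      4 * Fintype.card G.Vertex := by
    simp only [Fintype.card_sum]
    lia
  rw [← hcard]
  refine listsVertices_image.pairSup.pairSup.sum_pow_card_le (by positivity) fun w hw => ?_
  obtain ⟨⟨hw₁, hw₂⟩, hmeet⟩ := mem_overlapPairs.1 hw
  exact (le_div_iff₀ (by positivity)).2 (weight_pairSup_pairSup_mul_PhiV_pow_le hp₀ hp₁
    (mem_overlapPairs.1 hw₁).2 (mem_overlapPairs.1 hw₂).2 hmeet)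

end Overlaps

section Counts

/-- The number `X_G` of copies of `G` in the outcome `ω`. -/
noncomputable def copyCount (G : Pattern t k) (n₀ n : ℕ) (ω : Omega n₀ n t k) : ℕ :=
  presentCount univ (fun c : Placement G n₀ n => c.image.2) ω

/-- The number of ordered pairs of copies of `G` in the outcome `ω` that share a vertex. -/
noncomputable def overlapCount (G : Pattern t k) (n₀ n : ℕ) (ω : Omega n₀ n t k) : ℕ :=
  presentCount (overlappingPairs G n₀ n) (fun z => (pairSup Placement.image z).2) ω

lemma expec_copyCount :
    expec n₀ n t k p (fun ω => copyCount G n₀ n ω) =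
      (n₀.descFactorial G.m0 * ∏ i, n.descFactorial (G.m i) : ℕ) * p ^ #G.edges := by
  simp only [copyCount, expec_presentCount]
  simp [Placement.image, Fintype.card_embedding_eq]

/-- The factor by which the number of all class-preserving maps of `G` into `K` can exceed the
number of copies of `G` in `K`. -/
def Pattern.copyRatio (G : Pattern t k) : ℕ := G.m0 ^ G.m0 * ∏ i, G.m i ^ G.m i

lemma Pattern.copyRatio_pos (G : Pattern t k) : 0 < G.copyRatio :=
  Nat.mul_pos Nat.pow_self_pos (prod_pos fun _ _ => Nat.pow_self_pos)

lemma scale_le_copyRatio_mul_expec (hp₀ : 0 ≤ p) (h₀ : G.m0 ≤ n₀) (h : ∀ i, G.m i ≤ n) :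
    G.scale n₀ n p ≤ G.copyRatio * expec n₀ n t k p (fun ω => copyCount G n₀ n ω) := by
  rw [expec_copyCount, ← mul_assoc, ← Nat.cast_mul, Pattern.scale]
  gcongr ?_ * _
  rw [Nat.cast_le]
  calc n₀ ^ G.m0 * ∏ i, n ^ G.m i
      ≤ (G.m0 ^ G.m0 * n₀.descFactorial G.m0) * ∏ i, G.m i ^ G.m i * n.descFactorial (G.m i) := by
        gcongr with i
        exacts [pow_le_pow_mul_descFactorial h₀, pow_le_pow_mul_descFactorial (h i)]
    _ = G.copyRatio * (n₀.descFactorial G.m0 * ∏ i, n.descFactorial (G.m i)) := by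
        rw [prod_mul_distrib, mul_mul_mul_comm, Pattern.copyRatio]

lemma variance_copyCount_le (hp₀ : 0 ≤ p) (hp₁ : p ≤ 1) (hΦ : 0 < PhiV n₀ n p G) :
    variance n₀ n t k p (fun ω => copyCount G n₀ n ω) ≤
      (2 * Fintype.card G.Vertex).factorial * (G.scale n₀ n p ^ 2 / PhiV n₀ n p G) :=
  (variance_presentCount_le_sum_overlapPairs hp₀ univ fun c => c.isSubgraph_image).trans
    (sum_overlappingPairs_le hp₀ hp₁ hΦ)

lemma expec_overlapCount_le (hp₀ : 0 ≤ p) (hp₁ : p ≤ 1) (hΦ : 0 < PhiV n₀ n p G) :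
    expec n₀ n t k p (fun ω => overlapCount G n₀ n ω) ≤
      (2 * Fintype.card G.Vertex).factorial * (G.scale n₀ n p ^ 2 / PhiV n₀ n p G) :=
  (expec_presentCount _ _).trans_le (sum_overlappingPairs_le hp₀ hp₁ hΦ)

lemma variance_overlapCount_le (hp₀ : 0 ≤ p) (hp₁ : p ≤ 1) (hΦ : 0 < PhiV n₀ n p G) :
    variance n₀ n t k p (fun ω => overlapCount G n₀ n ω) ≤
      (4 * Fintype.card G.Vertex).factorial * (G.scale n₀ n p ^ 4 / PhiV n₀ n p G ^ 3) :=
  (variance_presentCount_le_sum_overlapPairs hp₀ _ fun z =>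
    z.1.isSubgraph_image.sup z.2.isSubgraph_image).trans
    (sum_overlapPairs_overlappingPairs_le hp₀ hp₁ hΦ)

end Counts

section DisjointCopies

lemma Placement.meets_image_self [Nonempty G.Vertex] (c : Placement G n₀ n) :
    Meets c.image c.image := fun h =>
  (univ_nonempty.map).ne_empty (disjoint_self.1 h)

lemma card_le_DG [hG : Nonempty G.Vertex] {ω : Omega n₀ n t k} {I : Finset (Placement G n₀ n)}
    (hgood : ∀ c ∈ I, ∀ e ∈ c.image.2, ω e = true)
    (hdisj : (I : Set (Placement G n₀ n)).Pairwise fun c c' => ¬ Meets c.image c'.image) :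
    #I ≤ DG G n₀ n ω := by
  refine le_csSup ?_ ⟨fun i => (I.equivFin.symm i).1.toCopyMap, fun i => ?_, fun i i' hii' => ?_⟩
  · obtain ⟨a | y⟩ := hG
    · refine ⟨n₀, ?_⟩
      rintro d ⟨F, -, hF⟩
      simpa using Fintype.card_le_of_injective (fun i => (F i).f0 a) fun i i' h =>
        by_contra fun hne => (hF i i' hne).1 a a h
    · refine ⟨n, ?_⟩
      rintro d ⟨F, -, hF⟩
      simpa using Fintype.card_le_of_injective (fun i => (F i).f y.1 y.2) fun i i' h =>
        by_contra fun hne => (hF i i' hne).2 y.1 y.2 y.2 h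
  · exact Placement.isGoodCopy_toCopyMap (hgood _ (I.equivFin.symm i).2)
  · refine Placement.disjointCopies_toCopyMap (hdisj (Subtype.prop _) (Subtype.prop _) ?_)
    exact fun h => hii' (I.equivFin.symm.injective (Subtype.ext h))

lemma sq_copyCount_le_DG_mul_overlapCount [Nonempty G.Vertex] (ω : Omega n₀ n t k) :
    copyCount G n₀ n ω ^ 2 ≤ DG G n₀ n ω * overlapCount G n₀ n ω := by
  let present : Finset (Placement G n₀ n) := {c | ∀ e ∈ c.image.2, ω e = true}
  obtain ⟨I, hI, hdisj, hcard⟩ := exists_subset_pairwise_not_sq_card_le present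
    (R := fun c c' => Meets c.image c'.image) (fun c _ => c.meets_image_self) fun _ _ h => h.symm
  have hD : #I ≤ DG G n₀ n ω := card_le_DG (fun c hc => (mem_filter.1 (hI hc)).2) hdisj
  have hN : #{z ∈ present ×ˢ present | Meets z.1.image z.2.image} ≤ overlapCount G n₀ n ω := by
    refine card_le_card fun z hz => ?_
    simp only [present, mem_filter, mem_product, mem_univ, true_and] at hz
    refine mem_filter.2 ⟨mem_overlapPairs.2 ⟨⟨mem_univ _, mem_univ _⟩, hz.2⟩, fun e he => ?_⟩
    exact (mem_union.1 he).elim (hz.1.1 e) (hz.1.2 e)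
  exact hcard.trans (Nat.mul_le_mul hD hN)

end DisjointCopies

end PartiteModel

theorem many_disjoint_copies_general {t k : ℕ} (G : Pattern t k) :
    ∃ c : ℝ, 0 < c ∧ ∃ C : ℝ, 0 < C ∧ ∀ (n₀ n : ℕ) (p : ℝ), 0 ≤ p → p ≤ 1 →
      0 < PhiV n₀ n p G → 1 - C / PhiV n₀ n p G ≤
        prOmega n₀ n t k p fun ω => c * PhiV n₀ n p G ≤ (DG G n₀ n ω : ℝ) := by
  let K₂ : ℝ := ((2 * Fintype.card G.Vertex).factorial : ℕ)
  let K₄ : ℝ := ((4 * Fintype.card G.Vertex).factorial : ℕ)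
  have hκ : (0 : ℝ) < G.copyRatio := Nat.cast_pos.2 G.copyRatio_pos
  refine ⟨1 / (4 * (G.copyRatio : ℝ) ^ 2 * (K₂ + 1)), by positivity,
    4 * (G.copyRatio : ℝ) ^ 2 * K₂ + K₄, by positivity, fun n₀ n p hp₀ hp₁ hΦ => ?_⟩
  have := nonempty_vertex_of_PhiV_pos hΦ
  obtain ⟨h₀, h⟩ := le_of_PhiV_pos hp₀ hp₁ hΦ
  exact one_sub_div_le_prOmega_of_sq_le_mul hp₀ hp₁ (fun _ => Nat.cast_nonneg _)
    (fun ω => mod_cast sq_copyCount_le_DG_mul_overlapCount ω) hκ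
    (scale_pos_of_PhiV_pos hp₀ hp₁ hΦ) hΦ (by positivity)
    (scale_le_copyRatio_mul_expec hp₀ h₀ h) (variance_copyCount_le hp₀ hp₁ hΦ)
    (expec_overlapCount_le hp₀ hp₁ hΦ) (variance_overlapCount_le hp₀ hp₁ hΦ)

/-- Let `G` be a fixed labelled `(t+1)`-partite multigraph pattern and
consider the random multigraph `𝒢(n₀,n,t,k,p)` with `n₀ = n₀(n)`.  Suppose that
`Φ_G^v → ∞` as `n → ∞`.  Then there is a constant `c > 0` (depending only on `G`) such
that with probability `1 - O(1/Φ_G^v)` we have `D_G ≥ c·Φ_G^v`. -/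
theorem many_disjoint_copies (t k : ℕ) (ht : 1 ≤ t) (hk : 2 ≤ k) (G : Pattern t k)
    (n₀ : ℕ → ℕ) (p : ℕ → ℝ)
    (hn₀ : ∀ n, 1 ≤ n₀ n) (hp : ∀ n, 0 ≤ p n ∧ p n ≤ 1)
    (hsize : ∀ᶠ n in atTop, G.m0 ≤ n₀ n ∧ ∀ i, G.m i ≤ n)
    (hPhiV : Tendsto (fun n => PhiV (n₀ n) n (p n) G) atTop atTop) :
    ∃ c : ℝ, 0 < c ∧ ∃ C : ℝ, 0 < C ∧ ∀ n : ℕ,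
      1 - C / PhiV (n₀ n) n (p n) G ≤
        prOmega (n₀ n) n t k (p n) (fun ω =>
          c * PhiV (n₀ n) n (p n) G ≤ (DG G (n₀ n) n ω : ℝ)) := by
  obtain ⟨c, hc, C, hC, h⟩ := many_disjoint_copies_general G
  refine ⟨c, hc, C, hC, fun n => ?_⟩
  obtain hΦ | hΦ := (PhiV_nonneg (n₀ := n₀ n) (n := n) (G := G) (hp n).1 (hp n).2).eq_or_lt
  · simpa only [← hΦ, div_zero, sub_zero] using
      one_le_prOmega_of_forall (hp n).1 (hp n).2 fun ω => by simp
  · exact h (n₀ n) n (p n) (hp n).1 (hp n).2 hΦ
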